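/- Let λ0, λ1 ∈ ℝ with λ0 > 0, λ1 > 0, λ0 + λ1 = 1, and ρ := Matrix.diagonal ![ (λ0 : ℂ), (λ1 : ℂ) ]. Let A1, A2 be Hermitian 2×2 complex matrices with trace 0, with SLDs L1, L2 relative to ρ, and let F be the QFIM. Then det F = 0 if and only if A1 * A2 = A2 * A1; i.e., the quantum Fisher information matrix for two parameters with derivatives A1, A2 at a full-rank qubit state is singular exactly when the two derivatives commute. -/

import Mathlib

open Matrix

/-- The symmetric logarithmic derivative of `A` relative to `ρ = diagonal ![λ0, λ1]`,
defined entrywise by `L μ ν = 2 ⬝ A μ ν / (λμ + λν)`. -/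
noncomputable def sld (l0 l1 : ℝ) (A : Matrix (Fin 2) (Fin 2) ℂ) : Matrix (Fin 2) (Fin 2) ℂ :=
  Matrix.of fun μ ν => 2 * A μ ν / ((![l0, l1] μ + ![l0, l1] ν : ℝ) : ℂ)

/-- The quantum Fisher information matrix of the pair of parameter-derivatives `A1, A2`
at the state `ρ = diagonal ![λ0, λ1]`:
`F i j = Re ((1/2) · Tr[ρ (L_i L_j + L_j L_i)])` where `L_i` is the SLD of `A_i`. -/
noncomputable def qfim (l0 l1 : ℝ) (A1 A2 : Matrix (Fin 2) (Fin 2) ℂ) :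
    Matrix (Fin 2) (Fin 2) ℝ :=
  Matrix.of fun i j =>
    ((1 / 2 : ℂ) * Matrix.trace (Matrix.diagonal ![(l0 : ℂ), (l1 : ℂ)] *
      (![sld l0 l1 A1, sld l0 l1 A2] i * ![sld l0 l1 A1, sld l0 l1 A2] j
        + ![sld l0 l1 A1, sld l0 l1 A2] j * ![sld l0 l1 A1, sld l0 l1 A2] i))).re

/-!
At a faithful state `ρ` the form `(X, Y) ↦ Re tr (Y ρ Xᴴ)` is a real inner product on matrices, and
on Hermitian matrices it agrees with the symmetrized form defining the quantum Fisher information.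
Hence the QFIM is the Gram matrix of the SLDs, and it is singular exactly when these are linearly
dependent over `ℝ`, or equivalently, as they are Hermitian, over `ℂ`. Since `A ↦ L` is `ℂ`-linear
and injective, this means that the derivatives are linearly dependent over `ℂ`. For traceless
`2 × 2` matrices that is the same as commuting, because the entries of the commutator are, up to
signs and factors of `2`, the components of a cross product.
-/

open scoped ComplexStarModule in
theorem linearIndependent_complex_iff_real_of_isSelfAdjoint {ι E : Type*} [AddCommGroup E]
    [Module ℂ E] [StarAddMonoid E] [StarModule ℂ E] {v : ι → E} (hv : ∀ i, IsSelfAdjoint (v i)) :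
    LinearIndependent ℂ v ↔ LinearIndependent ℝ v := by
  refine ⟨fun h => h.restrict_scalars' ℝ, fun h => ?_⟩
  rw [linearIndependent_iff'] at h ⊢
  intro s c hc i hi
  have hre : ∑ j ∈ s, (c j).re • v j = 0 := by
    simpa [realPart_smul, (hv _).coe_realPart, (hv _).imaginaryPart]
      using congrArg (fun x => (ℜ x : E)) hc
  have him : ∑ j ∈ s, (c j).im • v j = 0 := by
    simpa [imaginaryPart_smul, (hv _).coe_realPart, (hv _).imaginaryPart]
      using congrArg (fun x => (ℑ x : E)) hc
  exact Complex.ext (h s _ hre i hi) (h s _ him i hi)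

theorem linearIndependent_pair_map_iff {R M N : Type*} [Ring R] [AddCommGroup M] [AddCommGroup N]
    [Module R M] [Module R N] {f : M →ₗ[R] N} (hf : LinearMap.ker f = ⊥) {x y : M} :
    LinearIndependent R ![f x, f y] ↔ LinearIndependent R ![x, y] := by
  have hcomp : ![f x, f y] = f ∘ ![x, y] := funext <| Fin.forall_fin_two.mpr ⟨rfl, rfl⟩
  rw [hcomp, LinearMap.linearIndependent_iff f hf]

section TracelessMatrix

/-- The traceless `2 × 2` matrix with diagonal entry `v 0` and off-diagonal entries `v 1`, `v 2`,
as a linear parametrization of `𝔰𝔩₂` by coordinate vectors. -/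
def tracelessMatrix (R : Type*) [CommRing R] : (Fin 3 → R) →ₗ[R] Matrix (Fin 2) (Fin 2) R where
  toFun v := !![v 0, v 1; v 2, -v 0]
  map_add' v w := by
    ext i j
    fin_cases i <;> fin_cases j <;> simp [add_comm]
  map_smul' c v := by simp [smul_of]

variable {R K : Type*} [CommRing R] [Field K]

theorem tracelessMatrix_apply (v : Fin 3 → R) :
    tracelessMatrix R v = !![v 0, v 1; v 2, -v 0] := rfl

theorem ker_tracelessMatrix : LinearMap.ker (tracelessMatrix R) = ⊥ := by
  refine LinearMap.ker_eq_bot'.mpr fun v hv => ?_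
  rw [tracelessMatrix_apply, ← Matrix.ext_iff] at hv
  ext i
  fin_cases i
  exacts [hv 0 0, hv 0 1, hv 1 0]

theorem exists_tracelessMatrix_eq {A : Matrix (Fin 2) (Fin 2) R} (hA : A.trace = 0) :
    ∃ v, tracelessMatrix R v = A := by
  rw [trace_fin_two, add_eq_zero_iff_neg_eq] at hA
  exact ⟨![A 0 0, A 0 1, A 1 0], by simpa [tracelessMatrix_apply, hA] using (eta_fin_two A).symm⟩

theorem tracelessMatrix_commutator (v w : Fin 3 → R) :
    tracelessMatrix R v * tracelessMatrix R w - tracelessMatrix R w * tracelessMatrix R v =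
      tracelessMatrix R ![(v ⨯₃ w) 0, 2 * (v ⨯₃ w) 2, 2 * (v ⨯₃ w) 1] := by
  simp only [tracelessMatrix_apply, cross_apply, mul_fin_two, ← Matrix.ext_iff,
    Fin.forall_fin_two, Matrix.sub_apply, of_apply, cons_val]
  refine ⟨⟨?_, ?_⟩, ?_, ?_⟩ <;> ring

theorem tracelessMatrix_mul_comm_iff (h2 : (2 : K) ≠ 0) (v w : Fin 3 → K) :
    tracelessMatrix K v * tracelessMatrix K w = tracelessMatrix K w * tracelessMatrix K v ↔
      v ⨯₃ w = 0 := by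
  rw [← sub_eq_zero, tracelessMatrix_commutator, LinearMap.map_eq_zero_iff _
    (LinearMap.ker_eq_bot.mp ker_tracelessMatrix)]
  simp [funext_iff, Fin.forall_fin_succ, h2, and_comm]

theorem mul_comm_iff_not_linearIndependent_of_trace_eq_zero (h2 : (2 : K) ≠ 0)
    {A B : Matrix (Fin 2) (Fin 2) K} (hA : A.trace = 0) (hB : B.trace = 0) :
    A * B = B * A ↔ ¬LinearIndependent K ![A, B] := by
  obtain ⟨v, rfl⟩ := exists_tracelessMatrix_eq hA
  obtain ⟨w, rfl⟩ := exists_tracelessMatrix_eq hB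
  rw [tracelessMatrix_mul_comm_iff h2, linearIndependent_pair_map_iff ker_tracelessMatrix,
    ← crossProduct_ne_zero_iff_linearIndependent, not_not]

end TracelessMatrix

section FisherMatrix

variable {n ι : Type*} [Fintype n]

/-- The quantum Fisher information matrix at the state `ρ`, as a function of the symmetric
logarithmic derivatives `L i` in the parameter directions `i`. -/
noncomputable def fisherMatrix (ρ : Matrix n n ℂ) (L : ι → Matrix n n ℂ) : Matrix ι ι ℝ :=
  of fun i j => ((1 / 2 : ℂ) * trace (ρ * (L i * L j + L j * L i))).re

theorem fisherMatrix_apply_of_isHermitian {ρ : Matrix n n ℂ} {L : ι → Matrix n n ℂ}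
    (hρ : ρ.IsHermitian) (hL : ∀ i, (L i).IsHermitian) (i j : ι) :
    fisherMatrix ρ L i j = (trace (L j * ρ * (L i)ᴴ)).re := by
  have htrace : trace (ρ * (L i * L j)) = trace (L j * ρ * L i) := by
    rw [← Matrix.mul_assoc, trace_mul_comm, Matrix.mul_assoc]
  have hstar : trace (ρ * (L j * L i)) = star (trace (ρ * (L i * L j))) := by
    rw [← trace_conjTranspose, conjTranspose_mul, conjTranspose_mul, hρ.eq, (hL i).eq, (hL j).eq,
      trace_mul_comm]
  rw [fisherMatrix, of_apply, Matrix.mul_add, trace_add, hstar, htrace, (hL i).eq, RCLike.star_def,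
    Complex.add_conj, one_div, Complex.ofReal_mul, Complex.ofReal_ofNat,
    inv_mul_cancel_left₀ two_ne_zero, Complex.ofReal_re]

open scoped ComplexOrder in
theorem det_fisherMatrix_eq_zero_iff [Fintype ι] [DecidableEq ι] {ρ : Matrix n n ℂ}
    {L : ι → Matrix n n ℂ} (hρ : ρ.PosDef) (hL : ∀ i, (L i).IsHermitian) :
    (fisherMatrix ρ L).det = 0 ↔ ¬LinearIndependent ℝ L := by
  let : NormedAddCommGroup (Matrix n n ℂ) := ρ.toMatrixNormedAddCommGroup hρ
  let : InnerProductSpace ℂ (Matrix n n ℂ) := ρ.toMatrixInnerProductSpace hρ.posSemidef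
  let : InnerProductSpace ℝ (Matrix n n ℂ) := InnerProductSpace.rclikeToReal ℂ _
  have hgram : fisherMatrix ρ L = gram ℝ L :=
    Matrix.ext fun i j => fisherMatrix_apply_of_isHermitian hρ.isHermitian hL i j
  rw [hgram, ← det_gram_ne_zero_iff_linearIndependent, not_not]

end FisherMatrix

section SymmetricLogarithmicDerivative

/-- The symmetric logarithmic derivative `sld` as a linear map in the derivative of the state. -/
noncomputable def sldLinearMap (l0 l1 : ℝ) :
    Matrix (Fin 2) (Fin 2) ℂ →ₗ[ℂ] Matrix (Fin 2) (Fin 2) ℂ where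
  toFun := sld l0 l1
  map_add' A B := by
    ext μ ν
    simp only [sld, of_apply, Matrix.add_apply]
    ring
  map_smul' c A := by
    ext μ ν
    simp only [sld, of_apply, Matrix.smul_apply, smul_eq_mul, RingHom.id_apply]
    ring

theorem ker_sldLinearMap {l0 l1 : ℝ} (hl0 : l0 ≠ 0) (hl1 : l1 ≠ 0) (hadd : l0 + l1 ≠ 0) :
    LinearMap.ker (sldLinearMap l0 l1) = ⊥ := by
  have hden (μ ν : Fin 2) : ((![l0, l1] μ + ![l0, l1] ν : ℝ) : ℂ) ≠ 0 := by
    rw [Complex.ofReal_ne_zero]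
    fin_cases μ <;> fin_cases ν <;> simp [← two_mul, hl0, hl1, hadd, add_comm l1]
  refine LinearMap.ker_eq_bot'.mpr fun A hA => ?_
  ext μ ν
  have hentry : 2 * A μ ν / ((![l0, l1] μ + ![l0, l1] ν : ℝ) : ℂ) = 0 := congrFun₂ hA μ ν
  rwa [div_eq_zero_iff, or_iff_left (hden μ ν), mul_eq_zero_iff_left two_ne_zero] at hentry

theorem isHermitian_sld (l0 l1 : ℝ) {A : Matrix (Fin 2) (Fin 2) ℂ} (hA : A.IsHermitian) :
    (sld l0 l1 A).IsHermitian := by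
  refine IsHermitian.ext fun μ ν => ?_
  simp only [sld, of_apply, star_div₀, star_mul', hA.apply, star_ofNat, RCLike.star_def,
    Complex.conj_ofReal, add_comm]

end SymmetricLogarithmicDerivative

open scoped ComplexOrder in
theorem stmt_9_general {l0 l1 : ℝ} (hl0 : 0 < l0) (hl1 : 0 < l1)
    {A1 A2 : Matrix (Fin 2) (Fin 2) ℂ} (hA1 : A1.IsHermitian) (hA2 : A2.IsHermitian)
    (hA1tr : A1.trace = 0) (hA2tr : A2.trace = 0) :
    (qfim l0 l1 A1 A2).det = 0 ↔ A1 * A2 = A2 * A1 := by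
  have hρ : (diagonal ![(l0 : ℂ), (l1 : ℂ)]).PosDef := by
    simp [posDef_diagonal_iff, Fin.forall_fin_two, hl0, hl1]
  have hL : ∀ i, (![sld l0 l1 A1, sld l0 l1 A2] i).IsHermitian := by
    simp [Fin.forall_fin_two, isHermitian_sld, hA1, hA2]
  calc (qfim l0 l1 A1 A2).det = 0
      ↔ ¬LinearIndependent ℝ ![sld l0 l1 A1, sld l0 l1 A2] := det_fisherMatrix_eq_zero_iff hρ hL
    _ ↔ ¬LinearIndependent ℂ ![sld l0 l1 A1, sld l0 l1 A2] :=
      (linearIndependent_complex_iff_real_of_isSelfAdjoint hL).not.symm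
    _ ↔ ¬LinearIndependent ℂ ![A1, A2] :=
      (linearIndependent_pair_map_iff (ker_sldLinearMap hl0.ne' hl1.ne' (by positivity))).not
    _ ↔ A1 * A2 = A2 * A1 :=
      (mul_comm_iff_not_linearIndependent_of_trace_eq_zero two_ne_zero hA1tr hA2tr).symm

theorem stmt_9 (l0 l1 : ℝ) (hl0 : 0 < l0) (hl1 : 0 < l1) (hsum : l0 + l1 = 1)
    (A1 A2 : Matrix (Fin 2) (Fin 2) ℂ)
    (hA1 : A1.IsHermitian) (hA2 : A2.IsHermitian)
    (hA1tr : A1.trace = 0) (hA2tr : A2.trace = 0) :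
    (qfim l0 l1 A1 A2).det = 0 ↔ A1 * A2 = A2 * A1 :=
  stmt_9_general hl0 hl1 hA1 hA2 hA1tr hA2tr
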